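/- Let n ≥ 1, 1 < p < ∞, 0 < s < 1, α ≥ 0, and let Ω ⊆ ℍⁿ₊ be an open set. If φ ∈ W^{s,p,α}(Ω) ∩ L^∞(Ω) has compact support contained in Ω, and f ∈ W^{s,p,α}_{loc(x₁)}(ℍⁿ₊) ∩ L^∞(ℍⁿ₊), then the pointwise product fφ belongs to W^{s,p,α}(Ω), i.e. fφ ∈ L^p(Ω) and [fφ]_{s,p,α,Ω} < ∞. -/

import Mathlib

/-!
Since `tsupport φ` is compact in the half-space, it lies in a strip `D = 𝒟_{r,R}` with `0 < r`.
The double integral over `Ω × Ω` is controlled by a pointwise bound on the difference quotient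
(`product_diff_le`). If both points lie in `D`, the identity
`fφ(ξ) - fφ(ξ') = f(ξ) (φ(ξ) - φ(ξ')) + φ(ξ') (f(ξ) - f(ξ'))` and convexity of `t ↦ t ^ p` bound
the quotient by those of `φ` on `Ω` and of `f` on `D`. If one of the points is outside `D`, then
`φ` vanishes there and `|fφ(ξ) - fφ(ξ')| = |f| |φ(ξ) - φ(ξ')|` with `f` evaluated at the other
point, so the quotient of `φ` alone suffices and no estimate of the kernel away from the diagonal
is needed. Integrating, `[fφ]_Ω ≤ C₁ [φ]_Ω + C₂ [f]_D`.
-/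

open MeasureTheory Real Filter Topology ENNReal

noncomputable section

/-- The Heisenberg group `ℍⁿ` as `ℝⁿ × ℝⁿ × ℝ`. -/
abbrev Heis (n : ℕ) : Type := (Fin n → ℝ) × (Fin n → ℝ) × ℝ

/-- Group law `ξ ∘ ξ' = (x+x', y+y', t+t'+2⟨y,x'⟩−2⟨x,y'⟩)`. -/
def Hmul {n : ℕ} (a b : Heis n) : Heis n :=
  (a.1 + b.1, a.2.1 + b.2.1,
    a.2.2 + b.2.2 + 2 * (∑ i, a.2.1 i * b.1 i) - 2 * (∑ i, a.1 i * b.2.1 i))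

/-- Group inverse `ξ⁻¹ = −ξ`. -/
def Hinv {n : ℕ} (a : Heis n) : Heis n := (-a.1, -a.2.1, -a.2.2)

/-- Squared Euclidean norm of the horizontal part `z = (x,y) ∈ ℝ^{2n}`. -/
def zsq {n : ℕ} (a : Heis n) : ℝ := (∑ i, (a.1 i) ^ 2) + (∑ i, (a.2.1 i) ^ 2)

/-- Euclidean norm `|z|` of the horizontal part. -/
def znorm {n : ℕ} (a : Heis n) : ℝ := Real.sqrt (zsq a)

/-- The Koranyi–Folland gauge `d(ξ) = (|z|⁴ + t²)^{1/4}`. -/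
def hd {n : ℕ} (a : Heis n) : ℝ := ((zsq a) ^ 2 + (a.2.2) ^ 2) ^ ((1 : ℝ) / 4)

/-- Homogeneous dimension `Q = 2n + 2` (as a real number). -/
def hQ (n : ℕ) : ℝ := 2 * n + 2

/-- First coordinate `x₁` of a point of `ℍⁿ`. -/
def x1 {n : ℕ} (a : Heis n) : ℝ := if h : 0 < n then a.1 ⟨0, h⟩ else 0

/-- The half-space `ℍⁿ₊ = {ξ : x₁ > 0}`. -/
def halfSpace (n : ℕ) : Set (Heis n) := {a | 0 < x1 a}

/-- Euclidean distance `|z - z'|` of the horizontal parts. -/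
def zdist {n : ℕ} (a b : Heis n) : ℝ := znorm (Hmul (Hinv a) b)

/-- `J_p(t) = |t|^{p-2} t`. -/
def Jp (p t : ℝ) : ℝ := |t| ^ (p - 2) * t

/-- The Gagliardo-type seminorm (to the `p`-th power)
`[f]_{s,p,α,Ω}^p = ∫_Ω ∫_Ω |f(ξ)-f(ξ')|^p / (d(ξ⁻¹∘ξ')^{Q+sp} |z-z'|^α)`. -/
def gagSem {n : ℕ} (p s α : ℝ) (Ω : Set (Heis n)) (f : Heis n → ℝ) : ℝ≥0∞ :=
  ∫⁻ ξ in Ω, ∫⁻ ξ' in Ω, ENNReal.ofReal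
    (|f ξ - f ξ'| ^ p / (hd (Hmul (Hinv ξ) ξ') ^ (hQ n + s * p) * zdist ξ ξ' ^ α))

/-- The seminorm for `α = 0` (no horizontal weight). -/
def gagSem0 {n : ℕ} (p s : ℝ) (Ω : Set (Heis n)) (f : Heis n → ℝ) : ℝ≥0∞ :=
  ∫⁻ ξ in Ω, ∫⁻ ξ' in Ω, ENNReal.ofReal
    (|f ξ - f ξ'| ^ p / hd (Hmul (Hinv ξ) ξ') ^ (hQ n + s * p))

/-- The strip `𝒟_{r,R} = {ξ : r < x₁ < R}`. -/
def strip (n : ℕ) (r R : ℝ) : Set (Heis n) := {ξ | r < x1 ξ ∧ x1 ξ < R}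

/-- `f ∈ W^{s,p,α}_{loc(x₁)}(ℍⁿ₊)`. -/
def MemWlocx1 (n : ℕ) (p s α : ℝ) (f : Heis n → ℝ) : Prop :=
  Measurable f ∧ ∀ r R : ℝ, 0 < r → r < R →
    (∫⁻ ξ in strip n r R, ENNReal.ofReal (|f ξ| ^ p)) < ⊤ ∧
    gagSem p s α (strip n r R) f < ⊤

/-- `f ∈ L^{p-1}_{sp,α}(ℍⁿ)`. -/
def MemLsp (n : ℕ) (p s α : ℝ) (f : Heis n → ℝ) : Prop :=
  Measurable f ∧
  (∀ K : Set (Heis n), IsCompact K →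
    (∫⁻ ξ in K, ENNReal.ofReal (|f ξ| ^ (p - 1))) < ⊤) ∧
  (∫⁻ ξ, ENNReal.ofReal (|f ξ| ^ (p - 1) /
      ((1 + hd ξ) ^ (hQ n + s * p) * (1 + znorm ξ) ^ α))) < ⊤

/-- `φ ∈ W^{s,p,α}(Ω)`. -/
def MemW (n : ℕ) (p s α : ℝ) (Ω : Set (Heis n)) (φ : Heis n → ℝ) : Prop :=
  Measurable φ ∧ (∫⁻ ξ in Ω, ENNReal.ofReal (|φ ξ| ^ p)) < ⊤ ∧ gagSem p s α Ω φ < ⊤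

/-- `φ ∈ W^{s,p}(Ω)` (the case `α = 0`). -/
def MemW0 (n : ℕ) (p s : ℝ) (Ω : Set (Heis n)) (φ : Heis n → ℝ) : Prop :=
  Measurable φ ∧ (∫⁻ ξ in Ω, ENNReal.ofReal (|φ ξ| ^ p)) < ⊤ ∧ gagSem0 p s Ω φ < ⊤

/-- `f ∈ W^{s,p}_{loc}(ℍⁿ₊)`. -/
def MemWloc0 (n : ℕ) (p s : ℝ) (f : Heis n → ℝ) : Prop :=
  Measurable f ∧ ∀ K : Set (Heis n), IsCompact K → K ⊆ halfSpace n →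
    (∫⁻ ξ in K, ENNReal.ofReal (|f ξ| ^ p)) < ⊤ ∧ gagSem0 p s K f < ⊤

/-- `f ∈ L^{p-1}_{sp}(ℍⁿ)`. -/
def MemLsp0 (n : ℕ) (p s : ℝ) (f : Heis n → ℝ) : Prop :=
  Measurable f ∧
  (∀ K : Set (Heis n), IsCompact K →
    (∫⁻ ξ in K, ENNReal.ofReal (|f ξ| ^ (p - 1))) < ⊤) ∧
  (∫⁻ ξ, ENNReal.ofReal (|f ξ| ^ (p - 1) / (1 + hd ξ) ^ (hQ n + s * p))) < ⊤

/-- Surface measure of the unit sphere `S^{m-1} ⊂ ℝ^m`: `|S^{m-1}| = 2π^{m/2}/Γ(m/2)`. -/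
def sphereArea (m : ℕ) : ℝ := 2 * Real.pi ^ ((m : ℝ) / 2) / Real.Gamma ((m : ℝ) / 2)

/-- `ℐ(k,θ,α) = (∫₀^∞ (1+t²)^{-(k+2+θ)/4} dt) (∫₀^∞ r^{k-2}(1+r²)^{-(k+θ+α)/2} dr)`. -/
def calI (k : ℕ) (θ α : ℝ) : ℝ :=
  (∫ t in Set.Ioi (0 : ℝ), (1 + t ^ 2) ^ (-(((k : ℝ) + 2 + θ) / 4))) *
  (∫ r in Set.Ioi (0 : ℝ), r ^ ((k : ℝ) - 2) * (1 + r ^ 2) ^ (-(((k : ℝ) + θ + α) / 2)))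

/-- `Λ_{s,p,α} = 2∫₀¹ |1-τ^{(sp+α-1)/p}|^p/(1-τ)^{1+sp+α} dτ + 2/(sp+α)`. -/
def LamC (s p α : ℝ) : ℝ :=
  2 * (∫ τ in Set.Ioo (0 : ℝ) 1,
      |1 - τ ^ ((s * p + α - 1) / p)| ^ p / (1 - τ) ^ (1 + s * p + α)) + 2 / (s * p + α)

/-- `u_β(τ) = τ^β` for `τ > 0`, extended by `0`. -/
def ubeta (β τ : ℝ) : ℝ := if 0 < τ then τ ^ β else 0

/-- `λ(β,s,p)`. -/
def lam (p s β : ℝ) : ℝ :=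
  2 * (∫ τ in Set.Ioo (0 : ℝ) 1,
      Jp p (1 - τ ^ β) * (1 - τ ^ (s * p - 1 - β * (p - 1))) / (1 - τ) ^ (1 + s * p)) +
  2 / (s * p)

/-- `λ_ε(β,s,p)`. -/
def lamEps (p s β ε : ℝ) : ℝ :=
  2 * (∫ τ in Set.Ioo (0 : ℝ) (1 / (1 + ε)), Jp p (1 - τ ^ β) / |1 - τ| ^ (1 + s * p)) +
  2 * (∫ τ in Set.Ioi (1 + ε), Jp p (1 - τ ^ β) / |1 - τ| ^ (1 + s * p)) +
  2 / (s * p)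

/-- The box `D_{R₀}`. -/
def boxD (n : ℕ) (R₀ : ℝ) : Set (Heis n) :=
  {ξ | (∀ i, |ξ.1 i| ≤ R₀) ∧ (∀ i, |ξ.2.1 i| ≤ R₀) ∧ |ξ.2.2| ≤ R₀ ^ 2}

/-- The box `D_{R₀,t}`. -/
def boxDt (n : ℕ) (R₀ : ℝ) : Set (Heis n) :=
  {ξ | (∀ i, |ξ.1 i| ≤ R₀) ∧ (∀ i, |ξ.2.1 i| ≤ R₀) ∧ |ξ.2.2| ≤ R₀ ^ 2 + R₀}

/-- The weight `d(ξ⁻¹∘ξ')^{Q+sp} |z-z'|^α` in the denominator of the seminorm. -/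
def gagWeight {n : ℕ} (p s α : ℝ) (a b : Heis n) : ℝ :=
  hd (Hmul (Hinv a) b) ^ (hQ n + s * p) * zdist a b ^ α

lemma gagWeight_nonneg {n : ℕ} (p s α : ℝ) (a b : Heis n) : 0 ≤ gagWeight p s α a b := by
  have h1 : 0 ≤ hd (Hmul (Hinv a) b) := by unfold hd; positivity
  have h2 : 0 ≤ zdist a b := Real.sqrt_nonneg _
  unfold gagWeight
  positivity

lemma measurable_gagWeight {n : ℕ} (p s α : ℝ) :
    Measurable fun q : Heis n × Heis n => gagWeight p s α q.1 q.2 := by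
  unfold gagWeight hd zdist znorm zsq Hmul Hinv
  simp only [Pi.add_apply, Pi.neg_apply]
  fun_prop

lemma measurable_gagIntegrand {n : ℕ} (p s α : ℝ) {g : Heis n → ℝ} (hg : Measurable g) :
    Measurable fun q : Heis n × Heis n =>
      ENNReal.ofReal (|g q.1 - g q.2| ^ p / gagWeight p s α q.1 q.2) := by
  have := measurable_gagWeight (n := n) p s α
  have h1 : Measurable fun q : Heis n × Heis n => g q.1 - g q.2 := by fun_prop
  have h2 : Measurable fun q : Heis n × Heis n => |g q.1 - g q.2| := h1.abs
  exact ((h2.pow_const p).div this).ennreal_ofReal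

lemma continuous_x1 (n : ℕ) : Continuous (x1 : Heis n → ℝ) := by
  unfold x1
  split_ifs <;> fun_prop

/-- A compact subset of the half-space stays at positive distance from the boundary and bounded
in the `x₁` direction. -/
lemma exists_strip {n : ℕ} {K : Set (Heis n)} (hK : IsCompact K) (hKh : K ⊆ halfSpace n) :
    ∃ r R : ℝ, 0 < r ∧ r < R ∧ K ⊆ strip n r R := by
  rcases K.eq_empty_or_nonempty with rfl | hne
  · exact ⟨1, 2, one_pos, one_lt_two, Set.empty_subset _⟩
  obtain ⟨a, ha, hmin⟩ := hK.exists_isMinOn hne (continuous_x1 n).continuousOn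
  obtain ⟨b, hb, hmax⟩ := hK.exists_isMaxOn hne (continuous_x1 n).continuousOn
  have ha0 : 0 < x1 a := hKh ha
  have hab : x1 a ≤ x1 b := hmin hb
  refine ⟨x1 a / 2, x1 b + 1, by linarith, by linarith, fun c hc => ⟨?_, ?_⟩⟩
  · have : x1 a ≤ x1 c := hmin hc
    linarith
  · have : x1 c ≤ x1 b := hmax hc
    linarith

lemma measurableSet_strip (n : ℕ) (r R : ℝ) : MeasurableSet (strip n r R) :=
  (measurableSet_lt measurable_const (continuous_x1 n).measurable).inter
    (measurableSet_lt (continuous_x1 n).measurable measurable_const)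

/-- Product rule for `p`-th powers of differences; `u, u'` are values of `f` and `v, v'` values
of `φ` at two points. -/
lemma abs_mul_sub_mul_rpow_le {p A B u u' v v' : ℝ} (hp : 1 ≤ p)
    (hu : |u| ≤ A) (hv' : |v'| ≤ B) :
    |u * v - u' * v'| ^ p ≤
      2 ^ (p - 1) * A ^ p * |v - v'| ^ p + 2 ^ (p - 1) * B ^ p * |u - u'| ^ p := by
  have hA : 0 ≤ A := (abs_nonneg _).trans hu
  have hB : 0 ≤ B := (abs_nonneg _).trans hv'
  have h1 : |u * v - u' * v'| ≤ A * |v - v'| + B * |u - u'| := by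
    calc |u * v - u' * v'| = |u * (v - v') + v' * (u - u')| := by ring_nf
      _ ≤ |u * (v - v')| + |v' * (u - u')| := abs_add_le _ _
      _ ≤ _ := by
        rw [abs_mul, abs_mul]
        gcongr
  calc |u * v - u' * v'| ^ p ≤ (A * |v - v'| + B * |u - u'|) ^ p := by gcongr
    _ ≤ 2 ^ (p - 1) * ((A * |v - v'|) ^ p + (B * |u - u'|) ^ p) := by
          lift A to NNReal using hA
          lift B to NNReal using hB
          exact_mod_cast NNReal.rpow_add_le_mul_rpow_add_rpow (A * ‖v - v'‖₊) (B * ‖u - u'‖₊) hp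
    _ = _ := by
        rw [Real.mul_rpow hA (abs_nonneg _), Real.mul_rpow hB (abs_nonneg _)]
        ring

/-- Pointwise bound for the difference quotient of `fφ`, where `φ` vanishes off `D`: the quotient
of `f` is needed only when both points lie in `D`. -/
lemma product_diff_le {n : ℕ} {p A B : ℝ} (hp : 1 ≤ p) {D : Set (Heis n)} {φ f : Heis n → ℝ}
    (hD : ∀ c, c ∉ D → φ c = 0) {a b : Heis n} {w : ℝ} (hw : 0 ≤ w)
    (hfa : |f a| ≤ A) (hfb : |f b| ≤ A) (hφb : |φ b| ≤ B) :
    ENNReal.ofReal (|f a * φ a - f b * φ b| ^ p / w) ≤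
      ENNReal.ofReal (2 ^ (p - 1) * A ^ p) * ENNReal.ofReal (|φ a - φ b| ^ p / w) +
      ENNReal.ofReal (2 ^ (p - 1) * B ^ p) *
        D.indicator (fun a => D.indicator
          (fun b => ENNReal.ofReal (|f a - f b| ^ p / w)) b) a := by
  have hA : 0 ≤ A := (abs_nonneg _).trans hfa
  have hB : 0 ≤ B := (abs_nonneg _).trans hφb
  by_cases hab : a ∈ D ∧ b ∈ D
  · rw [Set.indicator_of_mem hab.1, Set.indicator_of_mem hab.2,
      ← ENNReal.ofReal_mul (by positivity), ← ENNReal.ofReal_mul (by positivity),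
      ← ENNReal.ofReal_add (by positivity) (by positivity)]
    apply ENNReal.ofReal_le_ofReal
    rw [← mul_div_assoc, ← mul_div_assoc, ← add_div]
    gcongr
    exact abs_mul_sub_mul_rpow_le hp hfa hφb
  · refine le_trans ?_ le_self_add
    rw [← ENNReal.ofReal_mul (by positivity), ← mul_div_assoc]
    apply ENNReal.ofReal_le_ofReal
    gcongr
    have key : |f a * φ a - f b * φ b| ≤ A * |φ a - φ b| := by
      by_cases ha : a ∈ D
      · have hb : φ b = 0 := hD b fun hb => hab ⟨ha, hb⟩
        rw [hb, mul_zero, sub_zero, sub_zero, abs_mul]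
        gcongr
      · rw [hD a ha, mul_zero, zero_sub, zero_sub, abs_neg, abs_neg, abs_mul]
        gcongr
    have h2 : (1 : ℝ) ≤ 2 ^ (p - 1) := Real.one_le_rpow one_le_two (by linarith)
    calc |f a * φ a - f b * φ b| ^ p ≤ (A * |φ a - φ b|) ^ p := by gcongr
      _ = 1 * A ^ p * |φ a - φ b| ^ p := by
        rw [Real.mul_rpow hA (abs_nonneg _), one_mul]
      _ ≤ 2 ^ (p - 1) * A ^ p * |φ a - φ b| ^ p := by gcongr

/-- Lemma 2.3: the product `fφ` belongs to `W^{s,p,α}(Ω)`. -/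
theorem product_in_W (n : ℕ) (hn : 1 ≤ n) (p s α : ℝ)
    (hp1 : 1 < p) (hs0 : 0 < s) (hs1 : s < 1) (hα : 0 ≤ α)
    (Ω : Set (Heis n)) (hΩopen : IsOpen Ω) (hΩ : Ω ⊆ halfSpace n)
    (φ f : Heis n → ℝ)
    (hφ : MemW n p s α Ω φ) (hφbd : ∃ M : ℝ, ∀ ξ ∈ Ω, |φ ξ| ≤ M)
    (hφc : HasCompactSupport φ) (hφΩ : tsupport φ ⊆ Ω)
    (hf : MemWlocx1 n p s α f) (hfbd : ∃ M : ℝ, ∀ ξ ∈ halfSpace n, |f ξ| ≤ M) :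
    (∫⁻ ξ in Ω, ENNReal.ofReal (|f ξ * φ ξ| ^ p)) < ⊤ ∧
      gagSem p s α Ω (fun ξ => f ξ * φ ξ) < ⊤ := by
  obtain ⟨hφm, hφL, hφS⟩ := hφ
  obtain ⟨hfm, hfW⟩ := hf
  obtain ⟨B, hB⟩ := hφbd
  obtain ⟨A, hA⟩ := hfbd
  have hΩm : MeasurableSet Ω := hΩopen.measurableSet
  constructor
  · calc ∫⁻ ξ in Ω, ENNReal.ofReal (|f ξ * φ ξ| ^ p)
        ≤ ∫⁻ ξ in Ω, ENNReal.ofReal (A ^ p) * ENNReal.ofReal (|φ ξ| ^ p) := by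
          refine setLIntegral_mono' hΩm fun a ha => ?_
          have hfa := hA a (hΩ ha)
          have hA0 : 0 ≤ A := (abs_nonneg _).trans hfa
          rw [← ENNReal.ofReal_mul (by positivity), ← Real.mul_rpow hA0 (abs_nonneg _), abs_mul]
          gcongr
      _ = ENNReal.ofReal (A ^ p) * ∫⁻ ξ in Ω, ENNReal.ofReal (|φ ξ| ^ p) :=
          lintegral_const_mul' _ _ ENNReal.ofReal_ne_top
      _ < ⊤ := ENNReal.mul_lt_top ENNReal.ofReal_lt_top hφL
  · obtain ⟨r, R, hr, hrR, hKD⟩ := exists_strip hφc (hφΩ.trans hΩ)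
    have hfS := (hfW r R hr hrR).2
    set D := strip n r R with hDdef
    have hDm : MeasurableSet D := measurableSet_strip n r R
    have hD : ∀ c, c ∉ D → φ c = 0 := fun c hc =>
      image_eq_zero_of_notMem_tsupport fun h => hc (hKD h)
    set G : (Heis n → ℝ) → Heis n → Heis n → ℝ≥0∞ := fun g a b =>
      ENNReal.ofReal (|g a - g b| ^ p / gagWeight p s α a b) with hG
    have hGm : Measurable fun q : Heis n × Heis n => G φ q.1 q.2 :=
      measurable_gagIntegrand p s α hφm
    have hGsec : ∀ a, Measurable (G φ a) := fun a => hGm.of_uncurry_left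
    set C₁ := ENNReal.ofReal (2 ^ (p - 1) * A ^ p)
    set C₂ := ENNReal.ofReal (2 ^ (p - 1) * B ^ p)
    set H : Heis n → Heis n → ℝ≥0∞ := fun a b =>
      D.indicator (fun a => D.indicator (G f a) b) a with hH
    have hHint : ∫⁻ a in Ω, ∫⁻ b in Ω, H a b ≤ gagSem p s α D f := by
      calc ∫⁻ a in Ω, ∫⁻ b in Ω, H a b
          ≤ ∫⁻ a, ∫⁻ b, H a b :=
            (setLIntegral_le_lintegral _ _).trans
              (lintegral_mono fun a => setLIntegral_le_lintegral _ _)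
        _ = ∫⁻ a, D.indicator (fun a => ∫⁻ b in D, G f a b) a := by
            refine lintegral_congr fun a => ?_
            by_cases ha : a ∈ D
            · simp only [hH, Set.indicator_of_mem ha]
              exact lintegral_indicator hDm _
            · simp [hH, Set.indicator_of_notMem ha]
        _ = ∫⁻ a in D, ∫⁻ b in D, G f a b := lintegral_indicator hDm _
        _ = gagSem p s α D f := rfl
    calc gagSem p s α Ω (fun ξ => f ξ * φ ξ)
        ≤ ∫⁻ a in Ω, ∫⁻ b in Ω, (C₁ * G φ a b + C₂ * H a b) := by
          refine setLIntegral_mono' hΩm fun a ha => setLIntegral_mono' hΩm fun b hb => ?_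
          exact product_diff_le hp1.le hD (gagWeight_nonneg p s α a b)
            (hA a (hΩ ha)) (hA b (hΩ hb)) (hB b hb)
      _ = ∫⁻ a in Ω, (C₁ * (∫⁻ b in Ω, G φ a b) + C₂ * ∫⁻ b in Ω, H a b) := by
          refine lintegral_congr fun a => ?_
          rw [lintegral_add_left ((hGsec a).const_mul _),
            lintegral_const_mul' _ _ ENNReal.ofReal_ne_top,
            lintegral_const_mul' _ _ ENNReal.ofReal_ne_top]
      _ = C₁ * gagSem p s α Ω φ + C₂ * ∫⁻ a in Ω, ∫⁻ b in Ω, H a b := by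
          rw [lintegral_add_left (hGm.lintegral_prod_right'.const_mul _),
            lintegral_const_mul' _ _ ENNReal.ofReal_ne_top,
            lintegral_const_mul' _ _ ENNReal.ofReal_ne_top]
          rfl
      _ ≤ C₁ * gagSem p s α Ω φ + C₂ * gagSem p s α D f := by gcongr
      _ < ⊤ := ENNReal.add_lt_top.2
          ⟨ENNReal.mul_lt_top ENNReal.ofReal_lt_top hφS,
            ENNReal.mul_lt_top ENNReal.ofReal_lt_top hfS⟩
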